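/- arXiv:2605.02145 — 3 statements merged into one kernel-verified Lean document; each statement's English description precedes it below -/
import Mathlib

section
/- Let f₁, …, f_k : (−1, 0) → ℝ be pairwise distinct functions, each of one of the two forms h ↦ |h|^r for some nonnegative rational number r, or h ↦ h^m·ln|h| for some positive integer m. Then there exists ε₀ ∈ (0,1) such that for every nonzero coefficient vector (c₁, …, c_k) ∈ ℝ^k, the function M(h) = Σ_{s=1}^{k} c_s·f_s(h) has at most k − 1 zeros in (−ε₀, 0) counted with multiplicity; that is, for any finitely many distinct points z₁, …, z_d ∈ (−ε₀, 0) and positive integers m₁, …, m_d such that M and its first m_ℓ − 1 derivatives all vanish at z_ℓ for each ℓ, one has m₁ + ⋯ + m_d ≤ k − 1. -/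
/-!
In the scale of functions `|h|^r (log |h|)^n`, any two distinct members are asymptotically
comparable as `h → 0⁻`, so a nontrivial linear combination has a dominant term and does not vanish
near `0`. The span of this scale is moreover an algebra closed under differentiation. These two
properties suffice for the classical division–differentiation argument: dividing a combination of
`g₀, …, g_k` by `g₀` and differentiating loses at most one zero (Rolle, with multiplicities) and
leaves a combination of the `k` Wronskians `W(g₀, g_s)`, which lie in the same algebra and are again
linearly independent.
-/

open Filter Topology Asymptotics Set

section ZeroCount

/-- The number of zeros of `f` in `S` counted with multiplicity, the multiplicity of a zero being
its analytic order. Points at which `f` is not analytic have order `0` and are not counted. -/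
noncomputable def zeroCount (f : ℝ → ℝ) (S : Set ℝ) : ℕ∞ :=
  ⨆ (Z : Finset ℝ) (_ : ↑Z ⊆ S), ∑ z ∈ Z, analyticOrderAt f z

variable {f g u : ℝ → ℝ} {S : Set ℝ}

lemma sum_analyticOrderAt_le_zeroCount {Z : Finset ℝ} (hZ : ↑Z ⊆ S) :
    ∑ z ∈ Z, analyticOrderAt f z ≤ zeroCount f S :=
  le_iSup₂ (f := fun (Z : Finset ℝ) (_ : ↑Z ⊆ S) => ∑ z ∈ Z, analyticOrderAt f z) Z hZ

lemma zeroCount_congr_order (h : ∀ x ∈ S, analyticOrderAt f x = analyticOrderAt g x) :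
    zeroCount f S = zeroCount g S :=
  biSup_congr fun _ hZ => Finset.sum_congr rfl fun x hx => h x (hZ hx)

lemma zeroCount_congr (hS : IsOpen S) (h : EqOn f g S) : zeroCount f S = zeroCount g S :=
  zeroCount_congr_order fun _ hx => analyticOrderAt_congr (h.eventuallyEq_of_mem (hS.mem_nhds hx))

lemma zeroCount_eq_zero (h : ∀ x ∈ S, f x ≠ 0) : zeroCount f S = 0 :=
  nonpos_iff_eq_zero.1 <| iSup₂_le fun _ hZ =>
    (Finset.sum_eq_zero fun x hx => analyticOrderAt_eq_zero.2 (.inr (h x (hZ hx)))).le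

lemma zeroCount_mul_of_ne_zero (hf : AnalyticOnNhd ℝ f S) (hu : AnalyticOnNhd ℝ u S)
    (hu0 : ∀ x ∈ S, u x ≠ 0) : zeroCount (f * u) S = zeroCount f S :=
  zeroCount_congr_order fun x hx => by
    rw [analyticOrderAt_mul (hf x hx) (hu x hx), (hu x hx).analyticOrderAt_eq_zero.2 (hu0 x hx),
      add_zero]

lemma sum_multiplicity_le_zeroCount {ι : Type*} [Fintype ι] (hf : AnalyticOnNhd ℝ f S) {z : ι → ℝ}
    (hz : Function.Injective z) (hzS : ∀ i, z i ∈ S) {m : ι → ℕ}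
    (hm : ∀ i, ∀ p < m i, iteratedDeriv p f (z i) = 0) :
    ((∑ i, m i : ℕ) : ℕ∞) ≤ zeroCount f S := by
  calc ((∑ i, m i : ℕ) : ℕ∞)
      ≤ ∑ i, analyticOrderAt f (z i) := by
        push_cast
        exact Finset.sum_le_sum fun i _ =>
          (natCast_le_analyticOrderAt_iff_iteratedDeriv_eq_zero (hf _ (hzS i))).2 (hm i)
    _ = ∑ x ∈ Finset.univ.map ⟨z, hz⟩, analyticOrderAt f x := by
        rw [Finset.sum_map, Function.Embedding.coeFn_mk]
    _ ≤ zeroCount f S := sum_analyticOrderAt_le_zeroCount (by simpa [range_subset_iff] using hzS)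

lemma card_le_card_critical_sdiff_add_one [hS : S.OrdConnected] (hf : ContinuousOn f S)
    {Z : Finset ℝ} (hZ : ↑Z ⊆ S) (hf0 : ∀ z ∈ Z, f z = 0) :
    ∃ W : Finset ℝ, ↑W ⊆ S ∧ (∀ w ∈ W, deriv f w = 0) ∧ Z.card ≤ (W \ Z).card + 1 := by
  have rolle : ∀ x ∈ Z, ∀ y ∈ Z, x < y → ∃ w ∈ Ioo x y, deriv f w = 0 := fun x hx y hy hxy =>
    exists_deriv_eq_zero hxy (hf.mono (hS.out (hZ hx) (hZ hy))) ((hf0 x hx).trans (hf0 y hy).symm)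
  choose! w hw hw0 using rolle
  let W := ((Z ×ˢ Z).filter fun q => q.1 < q.2).image fun q => w q.1 q.2
  have mem_W {v : ℝ} : v ∈ W ↔ ∃ x ∈ Z, ∃ y ∈ Z, x < y ∧ w x y = v := by
    simp [W, and_assoc]
  refine ⟨W, fun v hv => ?_, fun v hv => ?_, Finset.card_le_sdiff_of_interleaved
    fun x hx y hy hxy _ => ⟨w x y, mem_W.2 ⟨x, hx, y, hy, hxy, rfl⟩, hw x hx y hy hxy⟩⟩
  · obtain ⟨x, hx, y, hy, hxy, rfl⟩ := mem_W.1 hv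
    exact hS.out (hZ hx) (hZ hy) (Ioo_subset_Icc_self (hw x hx y hy hxy))
  · obtain ⟨x, hx, y, hy, hxy, rfl⟩ := mem_W.1 hv
    exact hw0 x hx y hy hxy

theorem zeroCount_le_zeroCount_deriv_add_one [S.OrdConnected] (hf : AnalyticOnNhd ℝ f S) :
    zeroCount f S ≤ zeroCount (deriv f) S + 1 := by
  refine iSup₂_le fun Z hZ => ?_
  -- Differentiating drops the order by one at each zero of `f`. The critical points given by Rolle
  -- that are not themselves zeros of `f` make up for all but one of these losses.
  let Z₀ := Z.filter (f · = 0)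
  have hZ₀ : ↑Z₀ ⊆ S := (Finset.coe_subset.2 (Finset.filter_subset _ _)).trans hZ
  have hf0 : ∀ z ∈ Z₀, f z = 0 := fun z hz => (Finset.mem_filter.1 hz).2
  obtain ⟨W, hWS, hW, hcard⟩ := card_le_card_critical_sdiff_add_one hf.continuousOn hZ₀ hf0
  have order_eq : ∀ z ∈ Z₀, analyticOrderAt f z = analyticOrderAt (deriv f) z + 1 := fun z hz => by
    simp [(hf z (hZ₀ hz)).analyticOrderAt_deriv_add_one, hf0 z hz]
  have one_le_order : ∀ w ∈ W \ Z₀, 1 ≤ analyticOrderAt (deriv f) w := fun w hw => by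
    have hwW := (Finset.mem_sdiff.1 hw).1
    rw [Order.one_le_iff_ne_zero, (hf w (hWS hwW)).deriv.analyticOrderAt_ne_zero]
    exact hW w hwW
  calc ∑ z ∈ Z, analyticOrderAt f z
      = ∑ z ∈ Z₀, analyticOrderAt f z := (Finset.sum_filter_of_ne fun z _ hz =>
        apply_eq_zero_of_analyticOrderAt_ne_zero hz).symm
    _ = ∑ z ∈ Z₀, analyticOrderAt (deriv f) z + Z₀.card := by
        rw [Finset.sum_congr rfl order_eq, Finset.sum_add_distrib, Finset.card_eq_sum_ones]
        simp
    _ ≤ ∑ z ∈ Z₀, analyticOrderAt (deriv f) z + ((W \ Z₀).card + 1) := by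
        gcongr
        exact_mod_cast hcard
    _ ≤ ∑ z ∈ Z₀, analyticOrderAt (deriv f) z +
          (∑ w ∈ W \ Z₀, analyticOrderAt (deriv f) w + 1) := by
        gcongr
        simpa using Finset.card_nsmul_le_sum _ _ _ one_le_order
    _ = ∑ z ∈ Z₀ ∪ (W \ Z₀), analyticOrderAt (deriv f) z + 1 := by
        rw [Finset.sum_union Finset.disjoint_sdiff, add_assoc]
    _ ≤ zeroCount (deriv f) S + 1 := by
        gcongr
        refine sum_analyticOrderAt_le_zeroCount ?_
        rw [Finset.union_sdiff_self_eq_union, Finset.coe_union]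
        exact union_subset hZ₀ hWS

end ZeroCount

section Wronskian

/-- The Wronskian `u v' - u' v` of two real functions. -/
noncomputable def realWronskian (u v : ℝ → ℝ) : ℝ → ℝ := u * deriv v - deriv u * v

variable {u v : ℝ → ℝ} {x : ℝ} {S : Set ℝ}

lemma realWronskian_self (u : ℝ → ℝ) : realWronskian u u = 0 := by
  simp [realWronskian, mul_comm]

lemma realWronskian_sum_smul {ι : Type*} {s : Finset ι} {g : ι → ℝ → ℝ} (c : ι → ℝ)
    (hg : ∀ i ∈ s, DifferentiableAt ℝ (g i) x) :
    realWronskian u (∑ i ∈ s, c i • g i) x = ∑ i ∈ s, c i * realWronskian u (g i) x := by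
  have deriv_eq : deriv (∑ i ∈ s, c i • g i) x = ∑ i ∈ s, c i * deriv (g i) x :=
    (HasDerivAt.sum fun i hi => (hg i hi).hasDerivAt.const_smul (c i)).deriv
  simp only [realWronskian, Pi.sub_apply, Pi.mul_apply, deriv_eq, Finset.sum_apply, Pi.smul_apply,
    smul_eq_mul, Finset.mul_sum, ← Finset.sum_sub_distrib]
  exact Finset.sum_congr rfl fun i _ => by ring

lemma deriv_div_eq_realWronskian (hu : DifferentiableAt ℝ u x) (hv : DifferentiableAt ℝ v x)
    (hx : u x ≠ 0) : deriv (v / u) x = realWronskian u v x / u x ^ 2 := by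
  rw [deriv_div hv hu hx, realWronskian]
  simp only [Pi.sub_apply, Pi.mul_apply]
  ring

lemma exists_eqOn_smul_of_realWronskian_eq_zero (hS : IsOpen S) (hS' : IsPreconnected S)
    (hu : DifferentiableOn ℝ u S) (hv : DifferentiableOn ℝ v S) (hu0 : ∀ x ∈ S, u x ≠ 0)
    (hW : EqOn (realWronskian u v) 0 S) : ∃ C : ℝ, EqOn v (C • u) S := by
  obtain ⟨C, hC⟩ := hS.exists_is_const_of_deriv_eq_zero hS' (hv.div hu hu0) fun x hx => by
    rw [deriv_div_eq_realWronskian (hu.differentiableAt (hS.mem_nhds hx))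
      (hv.differentiableAt (hS.mem_nhds hx)) (hu0 x hx), hW hx]
    simp
  exact ⟨C, fun x hx => (div_eq_iff (hu0 x hx)).1 (hC x hx)⟩

theorem zeroCount_le_zeroCount_realWronskian_add_one [S.OrdConnected] (hS : IsOpen S)
    (hu : AnalyticOnNhd ℝ u S) (hv : AnalyticOnNhd ℝ v S) (hu0 : ∀ x ∈ S, u x ≠ 0) :
    zeroCount v S ≤ zeroCount (realWronskian u v) S + 1 := by
  have hW : AnalyticOnNhd ℝ (realWronskian u v) S := (hu.mul hv.deriv).sub (hu.deriv.mul hv)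
  have deriv_eq : EqOn (deriv (v / u)) (realWronskian u v * (u ^ 2)⁻¹) S := fun x hx => by
    rw [deriv_div_eq_realWronskian (hu x hx).differentiableAt (hv x hx).differentiableAt (hu0 x hx)]
    rfl
  calc zeroCount v S
      = zeroCount (v / u) S := by
        rw [div_eq_mul_inv, zeroCount_mul_of_ne_zero hv (hu.inv hu0)
          fun x hx => inv_ne_zero (hu0 x hx)]
    _ ≤ zeroCount (deriv (v / u)) S + 1 :=
        zeroCount_le_zeroCount_deriv_add_one (hv.div hu hu0)
    _ = zeroCount (realWronskian u v) S + 1 := by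
        have hu2 : ∀ x ∈ S, (u ^ 2) x ≠ 0 := fun x hx => pow_ne_zero 2 (hu0 x hx)
        rw [zeroCount_congr hS deriv_eq, zeroCount_mul_of_ne_zero hW ((hu.pow 2).inv hu2)
          fun x hx => inv_ne_zero (hu2 x hx)]

end Wronskian

section HardyAlgebra

/-- An algebra of functions that are analytic on `(a, b)`, closed under differentiation there, whose
nonzero members have no zeros near `b`. This is a Hardy field without the requirement of inverses.
Closure under `deriv` is only asked up to equality on `(a, b)`, since the members are functions on
all of `ℝ`. -/
structure IsHardyAlgebra (A : Subalgebra ℝ (ℝ → ℝ)) (a b : ℝ) : Prop where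
  analyticOnNhd : ∀ f ∈ A, AnalyticOnNhd ℝ f (Ioo a b)
  exists_deriv_eqOn : ∀ f ∈ A, ∃ f' ∈ A, EqOn (deriv f) f' (Ioo a b)
  eventually_ne_zero : ∀ f ∈ A, f ≠ 0 → ∀ᶠ x in 𝓝[<] b, f x ≠ 0

lemma eventually_nhdsLT_forall_Ioo {b : ℝ} {P : ℝ → Prop}
    (h : ∀ᶠ x in 𝓝[<] b, P x) : ∀ᶠ l in 𝓝[<] b, ∀ x ∈ Ioo l b, P x := by
  obtain ⟨l₀, hl₀, hP⟩ := mem_nhdsLT_iff_exists_Ioo_subset.1 h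
  filter_upwards [Ioo_mem_nhdsLT hl₀] with l hl x hx using hP ⟨hl.1.trans hx.1, hx.2⟩

namespace IsHardyAlgebra

variable {A : Subalgebra ℝ (ℝ → ℝ)} {a b : ℝ}

lemma eq_zero_of_eqOn_zero (hA : IsHardyAlgebra A a b) {f : ℝ → ℝ} (hf : f ∈ A) {l : ℝ}
    (hl : l < b) (h : EqOn f 0 (Ioo l b)) : f = 0 := by
  by_contra hne
  obtain ⟨x, hx0, hx⟩ := ((hA.eventually_ne_zero f hf hne).and (Ioo_mem_nhdsLT hl)).exists
  exact hx0 (h hx)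

lemma exists_realWronskian_eqOn (hA : IsHardyAlgebra A a b) {u v : ℝ → ℝ} (hu : u ∈ A)
    (hv : v ∈ A) : ∃ w ∈ A, EqOn (realWronskian u v) w (Ioo a b) := by
  obtain ⟨u', hu', hu_eq⟩ := hA.exists_deriv_eqOn u hu
  obtain ⟨v', hv', hv_eq⟩ := hA.exists_deriv_eqOn v hv
  refine ⟨u * v' - u' * v, A.sub_mem (A.mul_mem hu hv') (A.mul_mem hu' hv), fun x hx => ?_⟩
  simp only [realWronskian, Pi.sub_apply, Pi.mul_apply, hu_eq hx, hv_eq hx]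

variable {k : ℕ} {g : Fin (k + 1) → ℝ → ℝ} {w : Fin k → ℝ → ℝ}

lemma realWronskian_sum_eqOn (hA : IsHardyAlgebra A a b) (hg : ∀ s, g s ∈ A)
    (hw : ∀ s, EqOn (realWronskian (g 0) (g s.succ)) (w s) (Ioo a b)) (c : Fin (k + 1) → ℝ) :
    EqOn (realWronskian (g 0) (∑ s, c s • g s)) (∑ s : Fin k, c s.succ • w s) (Ioo a b) := by
  intro x hx
  rw [realWronskian_sum_smul c fun s _ => (hA.analyticOnNhd _ (hg s) x hx).differentiableAt,
    Fin.sum_univ_succ, realWronskian_self, Finset.sum_apply]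
  simp [fun s => hw s hx]

lemma linearIndependent_realWronskian (hA : IsHardyAlgebra A a b) (hab : a < b)
    (hg : ∀ s, g s ∈ A) (hli : LinearIndependent ℝ g)
    (hw : ∀ s, EqOn (realWronskian (g 0) (g s.succ)) (w s) (Ioo a b)) :
    LinearIndependent ℝ w := by
  have hg0 := eventually_nhdsLT_forall_Ioo (hA.eventually_ne_zero _ (hg 0) (hli.ne_zero 0))
  obtain ⟨l, hg0, hl⟩ := (hg0.and (Ioo_mem_nhdsLT hab)).exists
  have hsub : Ioo l b ⊆ Ioo a b := Ioo_subset_Ioo_left hl.1.le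
  rw [Fintype.linearIndependent_iff] at hli ⊢
  intro c hc s
  -- A relation among the Wronskians says `W(g₀, v) = 0`, so `v` is a multiple of `g₀` near `b`.
  let v := ∑ s, (Fin.cons 0 c : Fin (k + 1) → ℝ) s • g s
  have hv : v ∈ A := A.sum_mem fun s _ => A.smul_mem (hg s) _
  have hWv : EqOn (realWronskian (g 0) v) 0 (Ioo a b) := fun x hx => by
    simpa [v, hA.realWronskian_sum_eqOn hg hw _ hx] using congrFun hc x
  obtain ⟨C, hC⟩ := exists_eqOn_smul_of_realWronskian_eq_zero isOpen_Ioo isPreconnected_Ioo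
    ((hA.analyticOnNhd _ (hg 0)).mono hsub).differentiableOn
    ((hA.analyticOnNhd _ hv).mono hsub).differentiableOn hg0 (hWv.mono hsub)
  have hv_eq : v - C • g 0 = 0 :=
    hA.eq_zero_of_eqOn_zero (A.sub_mem hv (A.smul_mem (hg 0) C)) hl.2
      fun x hx => sub_eq_zero.2 (hC hx)
  refine hli (Fin.cons (-C) c) ?_ s.succ
  simpa [v, Fin.sum_univ_succ, sub_eq_neg_add] using hv_eq

theorem eventually_zeroCount_lt (hA : IsHardyAlgebra A a b) (hab : a < b) {k : ℕ}
    {g : Fin k → ℝ → ℝ} (hg : ∀ s, g s ∈ A) (hli : LinearIndependent ℝ g) :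
    ∀ᶠ l in 𝓝[<] b, ∀ c : Fin k → ℝ, c ≠ 0 → zeroCount (∑ s, c s • g s) (Ioo l b) < k := by
  induction k with
  | zero => exact .of_forall fun l c hc => absurd (Subsingleton.elim c 0) hc
  | succ k ih =>
    choose w hwA hw using fun s : Fin k => hA.exists_realWronskian_eqOn (hg 0) (hg s.succ)
    filter_upwards [ih hwA (hA.linearIndependent_realWronskian hab hg hli hw),
      eventually_nhdsLT_forall_Ioo (hA.eventually_ne_zero _ (hg 0) (hli.ne_zero 0)),
      Ioo_mem_nhdsLT hab] with l hl hg0 hlab c hc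
    have hsub : Ioo l b ⊆ Ioo a b := Ioo_subset_Ioo_left hlab.1.le
    by_cases hc' : Fin.tail c = 0
    · have hc_succ : ∀ s : Fin k, c s.succ = 0 := congrFun hc'
      have hc0 : c 0 ≠ 0 := fun h => hc (funext fun s => Fin.cases h hc_succ s)
      rw [zeroCount_eq_zero]
      · exact_mod_cast k.succ_pos
      · intro x hx
        simp [Fin.sum_univ_succ, hc_succ, hc0, hg0 x hx]
    · have hF : ∑ s, c s • g s ∈ A := A.sum_mem fun s _ => A.smul_mem (hg s) _
      calc zeroCount (∑ s, c s • g s) (Ioo l b)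
          ≤ zeroCount (realWronskian (g 0) (∑ s, c s • g s)) (Ioo l b) + 1 :=
            zeroCount_le_zeroCount_realWronskian_add_one isOpen_Ioo
              ((hA.analyticOnNhd _ (hg 0)).mono hsub) ((hA.analyticOnNhd _ hF).mono hsub) hg0
        _ = zeroCount (∑ s : Fin k, c s.succ • w s) (Ioo l b) + 1 := by
            rw [zeroCount_congr isOpen_Ioo ((hA.realWronskian_sum_eqOn hg hw c).mono hsub)]
        _ < (k + 1 : ℕ) := by
            push_cast
            exact (ENat.add_lt_add_iff_right ENat.one_ne_top).2 (hl (Fin.tail c) hc')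

end IsHardyAlgebra

end HardyAlgebra

section DominantTerm

variable {ι α E 𝕜 : Type*} [NormedAddCommGroup E] [NormedField 𝕜] {l : Filter α} {u : ι → α → 𝕜}

lemma exists_forall_isLittleO_of_pairwise {u : ι → α → E} {s : Finset ι} (hs : s.Nonempty)
    (hu : Pairwise fun i j => u i =o[l] u j ∨ u j =o[l] u i) :
    ∃ i ∈ s, ∀ j ∈ s, j ≠ i → u j =o[l] u i := by
  induction hs using Finset.Nonempty.cons_induction with
  | singleton i => exact ⟨i, by simp, by simp⟩
  | cons n s hn _ ih =>
    obtain ⟨i, hi, hdom⟩ := ih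
    rcases hu (ne_of_mem_of_not_mem hi hn) with h | h
    · refine ⟨n, by simp, fun j hj hjn => ?_⟩
      have hj : j ∈ s := (Finset.mem_cons.1 hj).resolve_left hjn
      obtain rfl | hji := eq_or_ne j i
      · exact h
      · exact (hdom j hj hji).trans h
    · refine ⟨i, by simp [hi], fun j hj hji => ?_⟩
      obtain rfl | hj := Finset.mem_cons.1 hj
      · exact h
      · exact hdom j hj hji

lemma eventually_add_ne_zero_of_isLittleO {f g : α → E} (hgf : g =o[l] f)
    (hf : ∀ᶠ x in l, f x ≠ 0) : ∀ᶠ x in l, f x + g x ≠ 0 := by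
  filter_upwards [hgf.bound one_half_pos, hf] with x hbound hfx hsum
  rw [eq_neg_of_add_eq_zero_right hsum, norm_neg] at hbound
  linarith [norm_pos_iff.2 hfx]

lemma eventually_linearCombination_ne_zero
    (hu : Pairwise fun i j => u i =o[l] u j ∨ u j =o[l] u i)
    (hu0 : ∀ i, ∀ᶠ x in l, u i x ≠ 0) {c : ι →₀ 𝕜} (hc : c ≠ 0) :
    ∀ᶠ x in l, Finsupp.linearCombination 𝕜 u c x ≠ 0 := by
  classical
  obtain ⟨i, hi, hdom⟩ :=
    exists_forall_isLittleO_of_pairwise (Finsupp.support_nonempty_iff.2 hc) hu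
  have hci : c i ≠ 0 := Finsupp.mem_support_iff.1 hi
  have hrest : (fun x => ∑ j ∈ c.support.erase i, c j * u j x) =o[l] fun x => c i * u i x :=
    .fun_sum fun j hj => (((hdom j (Finset.mem_of_mem_erase hj)
      (Finset.ne_of_mem_erase hj)).const_mul_left _).const_mul_right hci)
  have hlead : ∀ᶠ x in l, c i * u i x ≠ 0 := (hu0 i).mono fun x hx => mul_ne_zero hci hx
  filter_upwards [eventually_add_ne_zero_of_isLittleO hrest hlead] with x hx
  rwa [Finsupp.linearCombination_apply, Finsupp.sum, Finset.sum_apply,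
    ← Finset.add_sum_erase _ _ hi]

lemma linearIndependent_of_pairwise_isLittleO [l.NeBot]
    (hu : Pairwise fun i j => u i =o[l] u j ∨ u j =o[l] u i)
    (hu0 : ∀ i, ∀ᶠ x in l, u i x ≠ 0) : LinearIndependent 𝕜 u := by
  refine linearIndependent_iff.2 fun c hc => by_contra fun hne => ?_
  obtain ⟨x, hx⟩ := (eventually_linearCombination_ne_zero hu hu0 hne).exists
  exact hx (congrFun hc x)

end DominantTerm

section PowLog

/-- The function `h ↦ |h|^r (log |h|)^n`, where `p = (r, n)`. Writing the power as
`exp (r log |h|)` makes `powLog` multiplicative in `p` also at `h = 0`, where `log` is `0`. -/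
noncomputable def powLog (p : ℝ × ℕ) (h : ℝ) : ℝ := Real.exp (p.1 * Real.log h) * Real.log h ^ p.2

lemma powLog_eq_abs_rpow_mul (p : ℝ × ℕ) {h : ℝ} (hh : h ≠ 0) :
    powLog p h = |h| ^ p.1 * Real.log |h| ^ p.2 := by
  rw [powLog, Real.rpow_def_of_pos (abs_pos.2 hh), Real.log_abs, mul_comm p.1]

lemma powLog_zero : powLog 0 = 1 := by
  ext h
  simp [powLog]

lemma powLog_add (p q : ℝ × ℕ) : powLog (p + q) = powLog p * powLog q := by
  ext h
  simp only [powLog, Prod.fst_add, Prod.snd_add, add_mul, Real.exp_add, pow_add, Pi.mul_apply]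
  ring

lemma eventually_powLog_ne_zero (p : ℝ × ℕ) : ∀ᶠ h in 𝓝[<] 0, powLog p h ≠ 0 := by
  filter_upwards [Real.tendsto_log_nhdsLT_zero.eventually_ne_atBot 0] with h hh
  exact mul_ne_zero (Real.exp_ne_zero _) (pow_ne_zero _ hh)

lemma analyticOnNhd_powLog (p : ℝ × ℕ) : AnalyticOnNhd ℝ (powLog p) (Iio 0) := by
  intro h hh
  have hlog : AnalyticAt ℝ Real.log h := by
    simpa [Function.comp_def] using (analyticAt_id (𝕜 := ℝ) (z := h)).neg.log (neg_pos.2 hh)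
  exact (analyticAt_const.mul hlog).rexp.mul (hlog.pow _)

-- For `p.2 = 0` the truncated exponent `p.2 - 1` is harmless: its coefficient `p.2` vanishes.
lemma deriv_powLog (p : ℝ × ℕ) {h : ℝ} (hh : h < 0) :
    deriv (powLog p) h = -p.1 * powLog (p.1 - 1, p.2) h - p.2 * powLog (p.1 - 1, p.2 - 1) h := by
  have hinv : h⁻¹ = -Real.exp (-Real.log h) := by
    rw [Real.exp_neg, Real.exp_log_of_neg hh, inv_neg, neg_neg]
  have hlog : HasDerivAt Real.log (-Real.exp (-Real.log h)) h := hinv ▸ Real.hasDerivAt_log hh.ne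
  refine ((hlog.const_mul p.1).exp.mul (hlog.pow p.2)).deriv.trans ?_
  simp only [powLog, sub_eq_add_neg, add_mul, Real.exp_add, neg_one_mul, Pi.pow_apply]
  ring

lemma isLittleO_powLog_of_lt {p q : ℝ × ℕ} (h : p.1 < q.1) : powLog q =o[𝓝[<] 0] powLog p := by
  have hneg_log : Tendsto (fun h => -Real.log h) (𝓝[<] 0) atTop :=
    tendsto_neg_atBot_atTop.comp Real.tendsto_log_nhdsLT_zero
  have pow_isLittleO : (fun h => Real.log h ^ q.2) =o[𝓝[<] 0]
      fun h => Real.exp ((q.1 - p.1) * -Real.log h) :=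
    .of_norm_left <| by
      simpa [Function.comp_def] using
        ((isLittleO_pow_exp_pos_mul_atTop q.2 (sub_pos.2 h)).comp_tendsto hneg_log).norm_left
  have exp_isBigO : (fun h => Real.exp (p.1 * Real.log h)) =O[𝓝[<] 0] powLog p := by
    refine .of_bound' ?_
    filter_upwards [hneg_log.eventually_ge_atTop 1] with h hh
    rw [powLog, norm_mul, norm_pow]
    exact le_mul_of_one_le_right (norm_nonneg _) (one_le_pow₀ (hh.trans (neg_le_abs _)))
  calc powLog q
      =o[𝓝[<] 0] fun h => Real.exp (q.1 * Real.log h) * Real.exp ((q.1 - p.1) * -Real.log h) :=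
        (isBigO_refl _ _).mul_isLittleO pow_isLittleO
    _ = fun h => Real.exp (p.1 * Real.log h) := by
        ext h
        rw [← Real.exp_add]
        ring_nf
    _ =O[𝓝[<] 0] powLog p := exp_isBigO

lemma isLittleO_powLog_of_eq_of_lt {p q : ℝ × ℕ} (h₁ : p.1 = q.1) (h₂ : q.2 < p.2) :
    powLog q =o[𝓝[<] 0] powLog p := by
  unfold powLog
  rw [h₁]
  exact (isBigO_refl _ _).mul_isLittleO
    ((isLittleO_pow_pow_cobounded_of_lt h₂).comp_tendsto
      (Real.tendsto_log_nhdsLT_zero.mono_right IsOrderBornology.atBot_le_cobounded))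

lemma pairwise_isLittleO_powLog :
    Pairwise fun p q => powLog p =o[𝓝[<] 0] powLog q ∨ powLog q =o[𝓝[<] 0] powLog p := by
  intro p q hpq
  rcases lt_trichotomy p.1 q.1 with h | h | h
  · exact .inr (isLittleO_powLog_of_lt h)
  · rcases lt_or_gt_of_ne fun h' => hpq (Prod.ext h h') with h' | h'
    · exact .inl (isLittleO_powLog_of_eq_of_lt h.symm h')
    · exact .inr (isLittleO_powLog_of_eq_of_lt h h')
  · exact .inl (isLittleO_powLog_of_lt h)

lemma linearIndependent_powLog : LinearIndependent ℝ powLog :=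
  linearIndependent_of_pairwise_isLittleO pairwise_isLittleO_powLog eventually_powLog_ne_zero

/-- The algebra of finite linear combinations of the functions `|h|^r (log |h|)^n` with `r` real
and `n` natural. -/
noncomputable def powLogAlgebra : Subalgebra ℝ (ℝ → ℝ) :=
  (Submodule.span ℝ (range powLog)).toSubalgebra
    (powLog_zero ▸ Submodule.subset_span (mem_range_self 0)) fun f g hf hg => by
      have hfg := Submodule.mul_mem_mul hf hg
      rw [Submodule.span_mul_span] at hfg
      refine Submodule.span_mono ?_ hfg
      rintro _ ⟨_, ⟨p, rfl⟩, _, ⟨q, rfl⟩, rfl⟩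
      exact ⟨p + q, powLog_add p q⟩

lemma mem_powLogAlgebra {f : ℝ → ℝ} :
    f ∈ powLogAlgebra ↔ f ∈ Submodule.span ℝ (range powLog) := Iff.rfl

lemma powLog_mem_powLogAlgebra (p : ℝ × ℕ) : powLog p ∈ powLogAlgebra :=
  Submodule.subset_span (mem_range_self p)

lemma analyticOnNhd_of_mem_powLogAlgebra {f : ℝ → ℝ} (hf : f ∈ powLogAlgebra) :
    AnalyticOnNhd ℝ f (Iio 0) := by
  rw [mem_powLogAlgebra] at hf
  induction hf using Submodule.span_induction with
  | mem _ hp =>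
    obtain ⟨p, rfl⟩ := hp
    exact analyticOnNhd_powLog p
  | zero => exact analyticOnNhd_const
  | add _ _ _ _ ihf ihg => exact ihf.add ihg
  | smul c _ _ ih => exact (analyticOnNhd_const (v := c)).smul ih

lemma exists_deriv_eqOn_of_mem_powLogAlgebra {f : ℝ → ℝ} (hf : f ∈ powLogAlgebra) :
    ∃ f' ∈ powLogAlgebra, EqOn (deriv f) f' (Iio 0) := by
  rw [mem_powLogAlgebra] at hf
  induction hf using Submodule.span_induction with
  | mem _ hp =>
    obtain ⟨p, rfl⟩ := hp
    exact ⟨-p.1 • powLog (p.1 - 1, p.2) - (p.2 : ℝ) • powLog (p.1 - 1, p.2 - 1),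
      sub_mem (powLogAlgebra.smul_mem (powLog_mem_powLogAlgebra _) _)
        (powLogAlgebra.smul_mem (powLog_mem_powLogAlgebra _) _), fun h hh => deriv_powLog p hh⟩
  | zero => exact ⟨0, zero_mem _, fun h _ => by simp⟩
  | add f g hf hg ihf ihg =>
    obtain ⟨f', hf', hf_eq⟩ := ihf
    obtain ⟨g', hg', hg_eq⟩ := ihg
    refine ⟨f' + g', add_mem hf' hg', fun h hh => ?_⟩
    rw [deriv_add (analyticOnNhd_of_mem_powLogAlgebra hf h hh).differentiableAt
      (analyticOnNhd_of_mem_powLogAlgebra hg h hh).differentiableAt, hf_eq hh, hg_eq hh,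
      Pi.add_apply]
  | smul c f hf ih =>
    obtain ⟨f', hf', hf_eq⟩ := ih
    refine ⟨c • f', powLogAlgebra.smul_mem hf' c, fun h hh => ?_⟩
    rw [deriv_const_smul _ (analyticOnNhd_of_mem_powLogAlgebra hf h hh).differentiableAt,
      hf_eq hh, Pi.smul_apply]

lemma eventually_ne_zero_of_mem_powLogAlgebra {f : ℝ → ℝ} (hf : f ∈ powLogAlgebra) (hf0 : f ≠ 0) :
    ∀ᶠ h in 𝓝[<] 0, f h ≠ 0 := by
  obtain ⟨c, rfl⟩ := (Finsupp.mem_span_range_iff_exists_finsupp).1 (mem_powLogAlgebra.1 hf)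
  exact eventually_linearCombination_ne_zero pairwise_isLittleO_powLog eventually_powLog_ne_zero
    (by rintro rfl; simp at hf0)

theorem isHardyAlgebra_powLogAlgebra (a : ℝ) : IsHardyAlgebra powLogAlgebra a 0 where
  analyticOnNhd _ hf := (analyticOnNhd_of_mem_powLogAlgebra hf).mono Ioo_subset_Iio_self
  exists_deriv_eqOn _ hf :=
    let ⟨f', hf', heq⟩ := exists_deriv_eqOn_of_mem_powLogAlgebra hf
    ⟨f', hf', heq.mono Ioo_subset_Iio_self⟩
  eventually_ne_zero _ := eventually_ne_zero_of_mem_powLogAlgebra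

theorem eventually_zeroCount_sum_powLog_lt {k : ℕ} {p : Fin k → ℝ × ℕ}
    (hp : Function.Injective p) : ∀ᶠ l in 𝓝[<] (0 : ℝ), ∀ c : Fin k → ℝ, c ≠ 0 →
      zeroCount (∑ s, c s • powLog (p s)) (Ioo l 0) < k :=
  (isHardyAlgebra_powLogAlgebra (-1)).eventually_zeroCount_lt neg_one_lt_zero
    (fun s => powLog_mem_powLogAlgebra (p s)) (linearIndependent_powLog.comp p hp)

end PowLog

lemma exists_injective_exponents {ι : Type*} {f : ι → ℝ → ℝ}
    (hforms : ∀ s, (∃ r : ℝ, f s = fun h => |h| ^ r) ∨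
      (∃ m : ℕ, f s = fun h => h ^ m * Real.log |h|))
    (hdist : Function.Injective f) :
    ∃ (a : ι → ℝ) (p : ι → ℝ × ℕ), (∀ s, a s ≠ 0) ∧ Function.Injective p ∧
      ∀ s, ∀ h < 0, f s h = a s * (|h| ^ (p s).1 * Real.log |h| ^ (p s).2) := by
  let form : ℝ ⊕ ℕ → ℝ → ℝ :=
    Sum.elim (fun r h => |h| ^ r) (fun m h => h ^ m * Real.log |h|)
  let sign : ℝ ⊕ ℕ → ℝ := Sum.elim 1 (fun m => (-1) ^ m)
  let exponents : ℝ ⊕ ℕ → ℝ × ℕ := Sum.elim (fun r => (r, 0)) (fun m => (m, 1))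
  have sign_ne_zero : ∀ e, sign e ≠ 0 := by rintro (_ | _) <;> simp [sign]
  have exponents_injective : Function.Injective exponents := by
    rintro (r | m) (r' | m') h <;> simp_all [exponents]
  have form_eq : ∀ e, ∀ h < 0,
      form e h = sign e * (|h| ^ (exponents e).1 * Real.log |h| ^ (exponents e).2) := by
    rintro (r | m) h hh
    · simp [form, sign, exponents]
    · simp [form, sign, exponents, ← mul_assoc, ← mul_pow, abs_of_neg hh]
  have exists_form : ∀ s, ∃ e, f s = form e := fun s =>
    (hforms s).elim (fun ⟨r, hr⟩ => ⟨.inl r, hr⟩) (fun ⟨m, hm⟩ => ⟨.inr m, hm⟩)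
  choose e he using exists_form
  have f_eq : f = form ∘ e := funext he
  have e_injective : Function.Injective e := .of_comp (f_eq ▸ hdist)
  exact ⟨sign ∘ e, exponents ∘ e, fun s => sign_ne_zero _, exponents_injective.comp e_injective,
    fun s h hh => he s ▸ form_eq (e s) h hh⟩

theorem zero_counting_principle_general {k : ℕ} {f : Fin k → ℝ → ℝ} {a : Fin k → ℝ}
    {p : Fin k → ℝ × ℕ} (ha : ∀ s, a s ≠ 0) (hp : Function.Injective p)
    (hf : ∀ s, ∀ h ∈ Ioo (-1 : ℝ) 0, f s h = a s * (|h| ^ (p s).1 * Real.log |h| ^ (p s).2)) :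
    ∃ ε₀ ∈ Ioo (0 : ℝ) 1, ∀ c : Fin k → ℝ, c ≠ 0 →
      ∀ (d : ℕ) (z : Fin d → ℝ) (m : Fin d → ℕ), Function.Injective z →
        (∀ ℓ, z ℓ ∈ Ioo (-ε₀) 0) →
        (∀ ℓ, ∀ i < m ℓ, iteratedDeriv i (fun h => ∑ s, c s * f s h) (z ℓ) = 0) →
        ∑ ℓ, m ℓ ≤ k - 1 := by
  obtain ⟨l, hcount, hl⟩ := ((eventually_zeroCount_sum_powLog_lt hp).and
    (Ioo_mem_nhdsLT neg_one_lt_zero)).exists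
  refine ⟨-l, ⟨by linarith [hl.2], by linarith [hl.1]⟩, fun c hc d z m hz hzl hm => ?_⟩
  rw [neg_neg] at hzl
  let c' : Fin k → ℝ := fun s => c s * a s
  have hc' : c' ≠ 0 := fun h => hc (funext fun s => by simpa [c', ha s] using congrFun h s)
  have sum_eq : EqOn (fun h => ∑ s, c s * f s h) (∑ s, c' s • powLog (p s)) (Ioo l 0) := by
    intro h hh
    simp [c', hf _ h ⟨hl.1.trans hh.1, hh.2⟩, powLog_eq_abs_rpow_mul _ hh.2.ne, mul_assoc]
  have sum_mem : ∑ s, c' s • powLog (p s) ∈ powLogAlgebra :=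
    powLogAlgebra.sum_mem fun s _ => powLogAlgebra.smul_mem (powLog_mem_powLogAlgebra _) _
  have sum_analytic := (analyticOnNhd_of_mem_powLogAlgebra sum_mem).mono
    (Ioo_subset_Iio_self (a := l))
  refine Nat.le_sub_one_of_lt (Nat.cast_lt (α := ℕ∞).1 ?_)
  calc ((∑ ℓ, m ℓ : ℕ) : ℕ∞)
      ≤ zeroCount (fun h => ∑ s, c s * f s h) (Ioo l 0) :=
        sum_multiplicity_le_zeroCount (sum_analytic.congr isOpen_Ioo sum_eq.symm) hz hzl hm
    _ = zeroCount (∑ s, c' s • powLog (p s)) (Ioo l 0) := zeroCount_congr isOpen_Ioo sum_eq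
    _ < k := hcount c' hc'

/-- Zero-counting principle: if `f₁,…,f_k` are pairwise distinct functions, each of the
form `h ↦ |h|^r` (`r ∈ ℚ`, `r ≥ 0`) or `h ↦ h^m·ln|h|` (`m ∈ ℕ`, `m ≥ 1`), then there is
`ε₀ ∈ (0,1)` such that for every nonzero `(c₁,…,c_k)`, the combination
`M(h) = Σ c_s f_s(h)` has at most `k−1` zeros in `(−ε₀,0)` counted with multiplicity. -/
theorem zero_counting_principle
    (k : ℕ) (f : Fin k → ℝ → ℝ)
    (hforms : ∀ s : Fin k,
      (∃ r : ℚ, 0 ≤ r ∧ f s = fun h : ℝ => |h| ^ (r : ℝ)) ∨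
      (∃ m : ℕ, 0 < m ∧ f s = fun h : ℝ => h ^ m * Real.log |h|))
    (hdist : Function.Injective f) :
    ∃ ε₀ ∈ Set.Ioo (0:ℝ) 1, ∀ c : Fin k → ℝ, c ≠ 0 →
      ∀ (d : ℕ) (z : Fin d → ℝ) (m : Fin d → ℕ),
        Function.Injective z →
        (∀ ℓ, z ℓ ∈ Set.Ioo (-ε₀) 0) →
        (∀ ℓ, 0 < m ℓ) →
        (∀ ℓ, ∀ p < m ℓ, iteratedDeriv p (fun h => ∑ s, c s * f s h) (z ℓ) = 0) →
        ∑ ℓ, m ℓ ≤ k - 1 := by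
  obtain ⟨a, p, ha, hp, hf⟩ := exists_injective_exponents
    (fun s => (hforms s).imp (fun ⟨r, _, h⟩ => ⟨r, h⟩) (fun ⟨m, _, h⟩ => ⟨m, h⟩)) hdist
  exact (zero_counting_principle_general ha hp fun s h hh => hf s h hh.2).imp fun _ =>
    And.imp_right fun hcount c hc d z m hz hzε _ => hcount c hc d z m hz hzε
end

section
/- For the quintic Hamiltonian H(x,y) = y²/2 − x⁴/4 + x⁵/5, the Abelian integrals along a closed level curve at level h satisfy I_{4,1} = I_{3,1}, and for every integer i ≥ 5: (4i+14)·I_{i,1} = (5i+10)·I_{i−1,1} + 20·(i−4)·h·I_{i−5,1}. -/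
/-!
On a level curve `y² / 2 + F x = h` one has `y dy = -F'(x) dx` and `y² = 2 (h - F x)`, so
`d (G(x) y ^ (j + 2)) = (2 (h - F x) G'(x) - (j + 2) F'(x) G(x)) y ^ j dx`.
An exact form integrates to zero along a closed curve. For `F x = -x ^ 4 / 4 + x ^ 5 / 5` and
`G x = x ^ k` this is a linear relation between the integrals of `x ^ (k - 1) y ^ j`,
`x ^ (k + 3) y ^ j` and `x ^ (k + 4) y ^ j`; the first drops out when `k = 0`.
-/

open Set MeasureTheory

/-- A parametrized closed curve `t ↦ (x t, y t)`, `t ∈ [a, b]`, in the level set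
`y ^ 2 / 2 + F x = h` of the Hamiltonian with potential `F`. Only `x` needs an integrable
derivative, since all the forms integrated along the curve are multiples of `dx`. -/
structure IsClosedLevelCurve (F : ℝ → ℝ) (h a b : ℝ) (x y : ℝ → ℝ) : Prop where
  le : a ≤ b
  continuousOn_fst : ContinuousOn x (Icc a b)
  continuousOn_snd : ContinuousOn y (Icc a b)
  differentiableAt_fst : ∀ t ∈ Ioo a b, DifferentiableAt ℝ x t
  differentiableAt_snd : ∀ t ∈ Ioo a b, DifferentiableAt ℝ y t
  intervalIntegrable_deriv_fst : IntervalIntegrable (deriv x) volume a b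
  fst_eq : x a = x b
  snd_eq : y a = y b
  level : ∀ t ∈ Icc a b, y t ^ 2 / 2 + F (x t) = h

namespace IsClosedLevelCurve

variable {F G : ℝ → ℝ} {h a b t : ℝ} {x y : ℝ → ℝ}

theorem snd_sq_eq (hc : IsClosedLevelCurve F h a b x y) (ht : t ∈ Icc a b) :
    y t ^ 2 = 2 * (h - F (x t)) := by
  linear_combination 2 * hc.level t ht

theorem snd_mul_deriv_snd (hc : IsClosedLevelCurve F h a b x y) (ht : t ∈ Ioo a b)
    (hF : DifferentiableAt ℝ F (x t)) :
    y t * deriv y t = -(deriv F (x t) * deriv x t) := by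
  have hconst : (fun s ↦ y s ^ 2 / 2 + F (x s)) =ᶠ[nhds t] fun _ ↦ h := by
    filter_upwards [Icc_mem_nhds ht.1 ht.2] with s hs using hc.level s hs
  have hderiv : HasDerivAt (fun s ↦ y s ^ 2 / 2 + F (x s))
      (y t * deriv y t + deriv F (x t) * deriv x t) t := by
    have hy := ((hc.differentiableAt_snd t ht).hasDerivAt.fun_pow 2).div_const 2
    have hx := hF.hasDerivAt.comp t (hc.differentiableAt_fst t ht).hasDerivAt
    exact (hy.fun_add hx).congr_deriv (by norm_num; ring)
  have hzero := hderiv.unique ((hasDerivAt_const t h).congr_of_eventuallyEq hconst)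
  exact eq_neg_of_add_eq_zero_left hzero

theorem hasDerivAt_comp_fst_mul_snd_pow (hc : IsClosedLevelCurve F h a b x y)
    (ht : t ∈ Ioo a b) (hF : DifferentiableAt ℝ F (x t)) (hG : DifferentiableAt ℝ G (x t))
    (j : ℕ) :
    HasDerivAt (fun s ↦ G (x s) * y s ^ (j + 2))
      ((2 * (h - F (x t)) * deriv G (x t) - (j + 2) * deriv F (x t) * G (x t)) *
        y t ^ j * deriv x t) t := by
  have hx := hG.hasDerivAt.comp t (hc.differentiableAt_fst t ht).hasDerivAt
  have hy := (hc.differentiableAt_snd t ht).hasDerivAt.fun_pow (j + 2)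
  refine (hx.fun_mul hy).congr_deriv ?_
  have hsq := hc.snd_sq_eq (Ioo_subset_Icc_self ht)
  have hydy := hc.snd_mul_deriv_snd ht hF
  simp only [Function.comp_apply, Nat.add_succ_sub_one, Nat.cast_add, Nat.cast_ofNat]
  linear_combination deriv G (x t) * deriv x t * y t ^ j * hsq +
    (j + 2) * G (x t) * y t ^ j * hydy

theorem intervalIntegrable (hc : IsClosedLevelCurve F h a b x y) (hG : Continuous G) (j : ℕ) :
    IntervalIntegrable (fun t ↦ G (x t) * y t ^ j * deriv x t) volume a b := by
  refine hc.intervalIntegrable_deriv_fst.continuousOn_mul ?_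
  rw [uIcc_of_le hc.le]
  exact (hG.comp_continuousOn hc.continuousOn_fst).mul (hc.continuousOn_snd.pow j)

theorem integral_eq_zero (hc : IsClosedLevelCurve F h a b x y) (hF : ContDiff ℝ 1 F)
    (hG : ContDiff ℝ 1 G) (j : ℕ) :
    ∫ t in a..b, (2 * (h - F (x t)) * deriv G (x t) - (j + 2) * deriv F (x t) * G (x t)) *
      y t ^ j * deriv x t = 0 := by
  have hcont : ContinuousOn (fun t ↦ G (x t) * y t ^ (j + 2)) (Icc a b) :=
    (hG.continuous.comp_continuousOn hc.continuousOn_fst).mul (hc.continuousOn_snd.pow (j + 2))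
  have hcoeff : Continuous fun u ↦ 2 * (h - F u) * deriv G u - (j + 2) * deriv F u * G u :=
    ((continuous_const.mul (continuous_const.sub hF.continuous)).mul hG.continuous_deriv_one).sub
      ((continuous_const.mul hF.continuous_deriv_one).mul hG.continuous)
  have hderiv := fun t (ht : t ∈ Ioo a b) ↦ hc.hasDerivAt_comp_fst_mul_snd_pow ht
    (hF.differentiable_one (x t)) (hG.differentiable_one (x t)) j
  rw [intervalIntegral.integral_eq_sub_of_hasDerivAt_of_le hc.le hcont hderiv
    (hc.intervalIntegrable hcoeff j), hc.fst_eq, hc.snd_eq, sub_self]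

end IsClosedLevelCurve

/-- The Abelian integral `∮ x ^ i * y ^ j dx` along the curve `t ↦ (x t, y t)`, `t ∈ [a, b]`. -/
noncomputable def abelianIntegral (a b : ℝ) (x y : ℝ → ℝ) (i j : ℕ) : ℝ :=
  ∫ t in a..b, x t ^ i * y t ^ j * deriv x t

/-- The potential `F` of the quintic Hamiltonian `H(x, y) = y ^ 2 / 2 + F x`. -/
noncomputable def quinticPotential (x : ℝ) : ℝ := -x ^ 4 / 4 + x ^ 5 / 5

theorem contDiff_quinticPotential {n : WithTop ℕ∞} : ContDiff ℝ n quinticPotential := by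
  unfold quinticPotential
  fun_prop

theorem deriv_quinticPotential (x : ℝ) : deriv quinticPotential x = x ^ 4 - x ^ 3 := by
  have hderiv := ((hasDerivAt_pow 4 x).fun_neg.div_const 4).fun_add
    ((hasDerivAt_pow 5 x).div_const 5)
  exact (hderiv.congr_deriv (by norm_num; ring)).deriv

section Quintic

variable {h a b : ℝ} {x y : ℝ → ℝ}

theorem abelianIntegral_quintic_recurrence
    (hc : IsClosedLevelCurve quinticPotential h a b x y) (k j : ℕ) :
    (4 * k + 10 * j + 20) * abelianIntegral a b x y (k + 4) j =
      (5 * k + 10 * j + 20) * abelianIntegral a b x y (k + 3) j +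
        20 * k * h * abelianIntegral a b x y (k - 1) j := by
  have hterm (c : ℝ) (i : ℕ) :
      IntervalIntegrable (fun t ↦ c * (x t ^ i * y t ^ j * deriv x t)) volume a b :=
    (hc.intervalIntegrable (continuous_pow i) j).const_mul c
  have hzero := hc.integral_eq_zero contDiff_quinticPotential (contDiff_fun_id.pow k) j
  have hexpand (t : ℝ) :
      (2 * (h - quinticPotential (x t)) * deriv (fun u ↦ u ^ k) (x t) -
        (j + 2) * deriv quinticPotential (x t) * x t ^ k) * y t ^ j * deriv x t =
      2 * k * h * (x t ^ (k - 1) * y t ^ j * deriv x t) +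
        (k / 2 + j + 2) * (x t ^ (k + 3) * y t ^ j * deriv x t) -
        (2 * k / 5 + j + 2) * (x t ^ (k + 4) * y t ^ j * deriv x t) := by
    rw [deriv_pow_field, deriv_quinticPotential, quinticPotential]
    cases k with
    | zero => push_cast; ring
    | succ k => push_cast; ring
  simp only [hexpand] at hzero
  rw [intervalIntegral.integral_sub ((hterm _ _).add (hterm _ _)) (hterm _ _),
    intervalIntegral.integral_add (hterm _ _) (hterm _ _)] at hzero
  simp only [intervalIntegral.integral_const_mul] at hzero
  unfold abelianIntegral
  linear_combination -10 * hzero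

theorem quintic_closed_recursion_ii_general
    (hc : IsClosedLevelCurve quinticPotential h a b x y) (j : ℕ) :
    abelianIntegral a b x y 4 j = abelianIntegral a b x y 3 j ∧
      ∀ i : ℕ, 5 ≤ i →
        (4 * i + 10 * j + 4 : ℝ) * abelianIntegral a b x y i j =
          (5 * i + 10 * j : ℝ) * abelianIntegral a b x y (i - 1) j +
            20 * ((i : ℝ) - 4) * h * abelianIntegral a b x y (i - 5) j := by
  constructor
  · have hrec := abelianIntegral_quintic_recurrence hc 0 j
    simp only [Nat.cast_zero, mul_zero, zero_mul, zero_add, add_zero] at hrec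
    exact mul_left_cancel₀ (by positivity) hrec
  · intro i hi
    obtain ⟨m, rfl⟩ := Nat.exists_eq_add_of_le' hi
    have hrec := abelianIntegral_quintic_recurrence hc (m + 1) j
    simp only [Nat.add_sub_cancel] at hrec
    rw [Nat.add_sub_cancel, show m + 5 - 1 = m + 1 + 3 by lia]
    push_cast at hrec ⊢
    linear_combination hrec

end Quintic

/-- For the quintic Hamiltonian `H(x,y) = y²/2 − x⁴/4 + x⁵/5`, the Abelian integrals along
a closed level curve at level `h` satisfy `I_{4,1} = I_{3,1}` and, for `i ≥ 5`,
`(4i+14)·I_{i,1} = (5i+10)·I_{i−1,1} + 20(i−4)·h·I_{i−5,1}`. -/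
theorem quintic_closed_recursion_ii
    (H : ℝ → ℝ → ℝ) (hH : ∀ x y, H x y = y ^ 2 / 2 - x ^ 4 / 4 + x ^ 5 / 5)
    (h : ℝ) (γ₁ γ₂ : ℝ → ℝ)
    (hγ₁ : ContDiff ℝ 1 γ₁) (hγ₂ : ContDiff ℝ 1 γ₂)
    (hclosed₁ : γ₁ 0 = γ₁ 1) (hclosed₂ : γ₂ 0 = γ₂ 1)
    (hlevel : ∀ t ∈ Set.Icc (0:ℝ) 1, H (γ₁ t) (γ₂ t) = h)
    (I : ℕ → ℕ → ℝ)
    (hI : ∀ i j, I i j = ∫ t in (0:ℝ)..1, γ₁ t ^ i * γ₂ t ^ j * deriv γ₁ t) :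
    I 4 1 = I 3 1 ∧
      ∀ i : ℕ, 5 ≤ i →
        (4 * i + 14 : ℝ) * I i 1 =
          (5 * i + 10 : ℝ) * I (i - 1) 1 + 20 * ((i : ℝ) - 4) * h * I (i - 5) 1 := by
  have hc : IsClosedLevelCurve quinticPotential h 0 1 γ₁ γ₂ :=
    { le := zero_le_one
      continuousOn_fst := hγ₁.continuous.continuousOn
      continuousOn_snd := hγ₂.continuous.continuousOn
      differentiableAt_fst := fun t _ ↦ hγ₁.differentiable_one t
      differentiableAt_snd := fun t _ ↦ hγ₂.differentiable_one t
      intervalIntegrable_deriv_fst := hγ₁.continuous_deriv_one.intervalIntegrable 0 1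
      fst_eq := hclosed₁
      snd_eq := hclosed₂
      level := fun t ht ↦ by
        rw [← hlevel t ht, hH, quinticPotential]
        ring }
  obtain ⟨hbase, hrec⟩ := quintic_closed_recursion_ii_general hc 1
  obtain rfl : I = abelianIntegral 0 1 γ₁ γ₂ := funext₂ hI
  refine ⟨hbase, fun i hi ↦ ?_⟩
  linear_combination hrec i hi
end

section
/- For the quintic Hamiltonian H(x,y) = y²/2 − x⁴/4 + x⁵/5, the integrals along an arc of a level curve at level h satisfy, for all integers i ≥ 5 and j ≥ 0: (4i + 10j + 4)·I⁺_{i,j} = 20·(i−4)·h·I⁺_{i−5,j} + 5·(i+2j)·I⁺_{i−1,j} − 10·K_{i−4,j+2}. -/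
/-!
On the level curve `y² / 2 + F(x) = h` one has `y dy = -F'(x) dx` and `y² = 2 (h - F(x))`, so for
every weight `G`

  `d (G(x) y ^ (j + 2)) = (2 G'(x) (h - F(x)) - (j + 2) G(x) F'(x)) y ^ j dx`.

For `G = x ^ (n + 1)` and `F = ∑ cₖ x ^ k` the right-hand side is a combination of the forms
`x ^ i y ^ j dx`, and integrating along the arc gives a recursion between their integrals.

The level equation gives the derivative of `y²` along the arc, and this determines the derivative of
`y ^ (j + 2)` even at the zeros of `y`, where `y` itself may fail to be differentiable.
-/

open MeasureTheory Polynomial Set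
open scoped Interval

section PowDerivative

variable {𝕜 𝕜' : Type*} [NontriviallyNormedField 𝕜] [NormedField 𝕜'] [NormedAlgebra 𝕜 𝕜']
  {t : 𝕜}

lemma hasDerivAt_mul_of_eq_zero {u v : 𝕜 → 𝕜'} {u' : 𝕜'} (hu : HasDerivAt u u' t)
    (hv : ContinuousAt v t) (hut : u t = 0) : HasDerivAt (fun s ↦ u s * v s) (u' * v t) t := by
  rw [hasDerivAt_iff_tendsto_slope] at hu ⊢
  refine (hu.mul (hv.tendsto.mono_left nhdsWithin_le_nhds)).congr fun s ↦ ?_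
  simp only [slope_def_module, hut, zero_mul, sub_zero, smul_mul_assoc]

lemma hasDerivAt_of_sq {y : 𝕜 → 𝕜'} {d : 𝕜'} (hsq : HasDerivAt (fun s ↦ y s ^ 2) d t)
    (hy : ContinuousAt y t) (hyt : 2 * y t ≠ 0) : HasDerivAt y (d / (2 * y t)) t := by
  rw [two_mul] at hyt ⊢
  rw [hasDerivAt_iff_tendsto_slope] at hsq ⊢
  have hsum : ContinuousAt (fun s ↦ y s + y t) t := hy.add continuousAt_const
  refine (hsq.div (hsum.tendsto.mono_left nhdsWithin_le_nhds) hyt).congr' ?_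
  filter_upwards [nhdsWithin_le_nhds (hsum.eventually_ne hyt)] with s hs
  rw [Pi.div_apply, slope_def_module, slope_def_module, sq_sub_sq, div_eq_iff hs, smul_mul_assoc,
    mul_comm (y s - y t)]

lemma hasDerivAt_pow_add_two_of_sq [NeZero (2 : 𝕜')] {y : 𝕜 → 𝕜'} {c : 𝕜'}
    (hsq : HasDerivAt (fun s ↦ y s ^ 2) (2 * c) t) (hy : ContinuousAt y t) (j : ℕ) :
    HasDerivAt (fun s ↦ y s ^ (j + 2)) ((j + 2) * y t ^ j * c) t := by
  rcases eq_or_ne (y t) 0 with hyt | hyt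
  · have hmul := hasDerivAt_mul_of_eq_zero hsq (hy.fun_pow j) (by simp [hyt])
    have hpow : (j : 𝕜') * y t ^ j = 0 := by cases j <;> simp [hyt]
    refine (hmul.congr_deriv ?_).congr_of_eventuallyEq (.of_forall fun s ↦ by ring)
    linear_combination -c * hpow
  · have h2 : (2 : 𝕜') ≠ 0 := two_ne_zero
    refine ((hasDerivAt_of_sq hsq hy (mul_ne_zero h2 hyt)).fun_pow (j + 2)).congr_deriv ?_
    simp only [Nat.add_succ_sub_one, Nat.cast_add, Nat.cast_ofNat]
    field_simp
    ring

end PowDerivative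

lemma mul_eval_derivative_eq_sum {R : Type*} [CommSemiring R] (F : R[X]) (z : R) :
    z * F.derivative.eval z = F.sum fun k c ↦ k * c * z ^ k := by
  rw [derivative_eval, Polynomial.sum_def, Polynomial.sum_def, Finset.mul_sum]
  refine Finset.sum_congr rfl fun k _ ↦ ?_
  cases k with
  | zero => simp
  | succ k => rw [Nat.add_sub_cancel]; ring

lemma weight_pow_eq_sub_sum {R : Type*} [CommRing R] (F : R[X]) (h z : R) (n j : ℕ) :
    2 * ((n + 1) * z ^ n) * (h - F.eval z) - (j + 2) * z ^ (n + 1) * F.derivative.eval z =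
      2 * (n + 1) * h * z ^ n -
        F.sum fun k c ↦ (2 * (n + 1) + k * (j + 2)) * c * z ^ (n + k) := by
  have hsum : (F.sum fun k c ↦ (2 * (n + 1) + k * (j + 2)) * c * z ^ (n + k)) =
      2 * (n + 1) * z ^ n * F.eval z + (j + 2) * z ^ n * (z * F.derivative.eval z) := by
    rw [mul_eval_derivative_eq_sum, eval_eq_sum]
    simp only [Polynomial.sum_def, Finset.mul_sum, ← Finset.sum_add_distrib]
    exact Finset.sum_congr rfl fun k _ ↦ by ring
  rw [hsum]
  ring

section LevelArc

variable {𝕜 : Type*} [RCLike 𝕜]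

/-- The curve `(x, y)`, parametrized by the interval between `a` and `b`, is an arc of the level
curve `y² / 2 + F(x) = h` along which the form `dx` is integrable. Differentiability is required of
`x` only, and only in the interior of the interval; `a` and `b` may come in either order. -/
structure IsLevelArc (F : 𝕜 → 𝕜) (h : 𝕜) (a b : ℝ) (x y : ℝ → 𝕜) : Prop where
  continuousOn_fst : ContinuousOn x [[a, b]]
  continuousOn_snd : ContinuousOn y [[a, b]]
  differentiableAt_fst : ∀ t ∈ uIoo a b, DifferentiableAt ℝ x t
  intervalIntegrable_deriv_fst : IntervalIntegrable (deriv x) volume a b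
  energy_eq : ∀ t ∈ [[a, b]], y t ^ 2 / 2 + F (x t) = h

/-- The integral `I⁺_{i,j}` of the form `x ^ i y ^ j dx` along the curve `(x, y)`. -/
noncomputable def arcIntegral (a b : ℝ) (x y : ℝ → 𝕜) (i j : ℕ) : 𝕜 :=
  ∫ t in a..b, x t ^ i * y t ^ j * deriv x t

/-- The boundary term `K_{i,j}`, the increment of `x ^ i y ^ j` along the curve `(x, y)`. -/
def arcBoundary (a b : ℝ) (x y : ℝ → 𝕜) (i j : ℕ) : 𝕜 :=
  x b ^ i * y b ^ j - x a ^ i * y a ^ j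

namespace IsLevelArc

variable {F G : 𝕜 → 𝕜} {h : 𝕜} {a b t : ℝ} {x y : ℝ → 𝕜}

lemma of_contDiff (hx : ContDiff ℝ 1 x) (hy : Continuous y)
    (hlevel : ∀ t ∈ [[a, b]], y t ^ 2 / 2 + F (x t) = h) : IsLevelArc F h a b x y where
  continuousOn_fst := hx.continuous.continuousOn
  continuousOn_snd := hy.continuousOn
  differentiableAt_fst _ _ := hx.differentiable one_ne_zero _
  intervalIntegrable_deriv_fst := (hx.continuous_deriv le_rfl).intervalIntegrable a b
  energy_eq := hlevel

lemma sq_snd_eq (arc : IsLevelArc F h a b x y) (ht : t ∈ [[a, b]]) :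
    y t ^ 2 = 2 * (h - F (x t)) := by
  linear_combination 2 * arc.energy_eq t ht

lemma hasDerivAt_sq_snd (arc : IsLevelArc F h a b x y) (ht : t ∈ uIoo a b)
    (hF : DifferentiableAt 𝕜 F (x t)) :
    HasDerivAt (fun s ↦ y s ^ 2) (2 * -(deriv F (x t) * deriv x t)) t := by
  have hFx : HasDerivAt (fun s ↦ F (x s)) (deriv F (x t) * deriv x t) t :=
    hF.hasDerivAt.comp t (arc.differentiableAt_fst t ht).hasDerivAt
  refine ((hFx.const_sub h).const_mul 2).congr_of_eventuallyEq ?_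
  filter_upwards [isOpen_Ioo.mem_nhds ht] with s hs
  exact arc.sq_snd_eq (Ioo_subset_Icc_self hs)

lemma hasDerivAt_weight_mul_pow (arc : IsLevelArc F h a b x y) (ht : t ∈ uIoo a b)
    (hF : DifferentiableAt 𝕜 F (x t)) (hG : DifferentiableAt 𝕜 G (x t)) (j : ℕ) :
    HasDerivAt (fun s ↦ G (x s) * y s ^ (j + 2))
      ((2 * deriv G (x t) * (h - F (x t)) - (j + 2) * G (x t) * deriv F (x t)) * y t ^ j *
        deriv x t) t := by
  have ht' : t ∈ [[a, b]] := Ioo_subset_Icc_self ht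
  have hGx : HasDerivAt (fun s ↦ G (x s)) (deriv G (x t) * deriv x t) t :=
    hG.hasDerivAt.comp t (arc.differentiableAt_fst t ht).hasDerivAt
  have hy : ContinuousAt y t :=
    arc.continuousOn_snd.continuousAt (Icc_mem_nhds ht.1 ht.2)
  have hypow := hasDerivAt_pow_add_two_of_sq (arc.hasDerivAt_sq_snd ht hF) hy j
  refine (hGx.fun_mul hypow).congr_deriv ?_
  linear_combination deriv G (x t) * deriv x t * y t ^ j * arc.sq_snd_eq ht'

theorem integral_weight_eq_sub (arc : IsLevelArc F h a b x y) (hF : ContDiff 𝕜 1 F)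
    (hG : ContDiff 𝕜 1 G) (j : ℕ) :
    ∫ t in a..b, (2 * deriv G (x t) * (h - F (x t)) - (j + 2) * G (x t) * deriv F (x t)) *
        y t ^ j * deriv x t =
      G (x b) * y b ^ (j + 2) - G (x a) * y a ^ (j + 2) := by
  have hx := arc.continuousOn_fst
  have hy := arc.continuousOn_snd
  have hFx := hF.continuous.comp_continuousOn hx
  have hGx := hG.continuous.comp_continuousOn hx
  have hF'x := (hF.continuous_deriv le_rfl).comp_continuousOn hx
  have hG'x := (hG.continuous_deriv le_rfl).comp_continuousOn hx
  refine intervalIntegral.integral_eq_sub_of_hasDeriv_right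
    (f := fun t ↦ G (x t) * y t ^ (j + 2)) (hGx.mul (hy.pow _)) (fun t ht ↦ ?_)
    (arc.intervalIntegrable_deriv_fst.continuousOn_mul ?_)
  · exact (arc.hasDerivAt_weight_mul_pow ht (hF.differentiable one_ne_zero _)
      (hG.differentiable one_ne_zero _) j).hasDerivWithinAt
  · exact (((continuousOn_const.mul hG'x).mul (continuousOn_const.sub hFx)).sub
      ((continuousOn_const.mul hGx).mul hF'x)).mul (hy.pow j)

lemma intervalIntegrable_pow_mul_pow (arc : IsLevelArc F h a b x y) (i j : ℕ) :
    IntervalIntegrable (fun t ↦ x t ^ i * y t ^ j * deriv x t) volume a b :=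
  arc.intervalIntegrable_deriv_fst.continuousOn_mul
    ((arc.continuousOn_fst.pow i).mul (arc.continuousOn_snd.pow j))

theorem sum_arcIntegral_eq {F : 𝕜[X]} (arc : IsLevelArc (F.eval ·) h a b x y) (n j : ℕ) :
    (F.sum fun k c ↦ (2 * (n + 1) + k * (j + 2)) * c * arcIntegral a b x y (n + k) j) =
      2 * (n + 1) * h * arcIntegral a b x y n j - arcBoundary a b x y (n + 1) (j + 2) := by
  have hF : ContDiff 𝕜 1 (F.eval ·) := by simpa using F.contDiff_aeval (𝕜 := 𝕜) 1
  have hint (c : 𝕜) (i : ℕ) :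
      IntervalIntegrable (fun t ↦ c * (x t ^ i * y t ^ j * deriv x t)) volume a b :=
    (arc.intervalIntegrable_pow_mul_pow i j).const_mul c
  have hint_sum : IntervalIntegrable (fun t ↦ ∑ k ∈ F.support,
      (2 * (n + 1) + k * (j + 2)) * F.coeff k * (x t ^ (n + k) * y t ^ j * deriv x t))
      volume a b := by
    simpa only [Finset.sum_fn] using IntervalIntegrable.sum F.support fun k _ ↦ hint _ (n + k)
  have hform (t : ℝ) :
      (2 * deriv (· ^ (n + 1)) (x t) * (h - F.eval (x t)) -
          (j + 2) * x t ^ (n + 1) * deriv (F.eval ·) (x t)) * y t ^ j * deriv x t =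
        2 * (n + 1) * h * (x t ^ n * y t ^ j * deriv x t) -
          ∑ k ∈ F.support, (2 * (n + 1) + k * (j + 2)) * F.coeff k *
            (x t ^ (n + k) * y t ^ j * deriv x t) := by
    have halg := weight_pow_eq_sub_sum F h (x t) n j
    rw [Polynomial.deriv, deriv_pow_field, Nat.add_sub_cancel, Nat.cast_succ, halg,
      Polynomial.sum_def, sub_mul, sub_mul, Finset.sum_mul, Finset.sum_mul]
    simp only [mul_assoc]
  have hweight := arc.integral_weight_eq_sub hF (G := (· ^ (n + 1))) (contDiff_id.pow (n + 1)) j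
  simp only [hform] at hweight
  rw [intervalIntegral.integral_sub (hint _ _) hint_sum,
    intervalIntegral.integral_finsetSum fun k _ ↦ hint _ _] at hweight
  simp only [intervalIntegral.integral_const_mul] at hweight
  simp only [arcIntegral, arcBoundary, Polynomial.sum_def]
  linear_combination -hweight

end IsLevelArc

theorem quintic_arc_recursion_ii_general {h : 𝕜} {a b : ℝ} {x y : ℝ → 𝕜}
    (arc : IsLevelArc (fun z ↦ z ^ 5 / 5 - z ^ 4 / 4) h a b x y) {i : ℕ} (hi : 5 ≤ i) (j : ℕ) :
    (4 * i + 10 * j + 4) * arcIntegral a b x y i j =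
      20 * (i - 4) * h * arcIntegral a b x y (i - 5) j +
        5 * (i + 2 * j) * arcIntegral a b x y (i - 1) j -
          10 * arcBoundary a b x y (i - 4) (j + 2) := by
  obtain ⟨n, rfl⟩ := Nat.exists_eq_add_of_le' hi
  let F : 𝕜[X] := monomial 5 (1 / 5) + monomial 4 (-1 / 4)
  have hF : (F.eval ·) = fun z ↦ z ^ 5 / 5 - z ^ 4 / 4 := by
    funext z
    simp only [F, eval_add, eval_monomial]
    ring
  rw [← hF] at arc
  have hrec := arc.sum_arcIntegral_eq n j
  rw [sum_add_index _ _ _ (fun _ ↦ by ring) (fun _ _ _ ↦ by ring),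
    sum_monomial_index _ _ (by ring), sum_monomial_index _ _ (by ring)] at hrec
  simp only [Nat.reduceSubDiff, Nat.add_sub_cancel]
  push_cast at hrec ⊢
  linear_combination 10 * hrec

end LevelArc

/-- For the quintic Hamiltonian `H(x,y) = y²/2 − x⁴/4 + x⁵/5`, the integrals along an arc
of a level curve at level `h` satisfy, for `i ≥ 5` and `j ≥ 0`:
`(4i+10j+4)·I⁺_{i,j} = 20(i−4)·h·I⁺_{i−5,j} + 5(i+2j)·I⁺_{i−1,j} − 10·K_{i−4,j+2}`. -/
theorem quintic_arc_recursion_ii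
    (H : ℝ → ℝ → ℝ) (hH : ∀ x y, H x y = y ^ 2 / 2 - x ^ 4 / 4 + x ^ 5 / 5)
    (h : ℝ) (γ₁ γ₂ : ℝ → ℝ)
    (hγ₁ : ContDiff ℝ 1 γ₁) (hγ₂ : ContDiff ℝ 1 γ₂)
    (hlevel : ∀ t ∈ Set.Icc (0:ℝ) 1, H (γ₁ t) (γ₂ t) = h)
    (Ip : ℕ → ℕ → ℝ)
    (hIp : ∀ i j, Ip i j = ∫ t in (0:ℝ)..1, γ₁ t ^ i * γ₂ t ^ j * deriv γ₁ t)
    (K : ℕ → ℕ → ℝ)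
    (hK : ∀ i j, K i j = γ₁ 1 ^ i * γ₂ 1 ^ j - γ₁ 0 ^ i * γ₂ 0 ^ j) :
    ∀ i j : ℕ, 5 ≤ i →
      (4 * i + 10 * j + 4 : ℝ) * Ip i j =
        20 * ((i : ℝ) - 4) * h * Ip (i - 5) j + 5 * ((i : ℝ) + 2 * j) * Ip (i - 1) j
          - 10 * K (i - 4) (j + 2) := by
  intro i j hi
  have arc : IsLevelArc (fun z ↦ z ^ 5 / 5 - z ^ 4 / 4) h 0 1 γ₁ γ₂ := by
    refine .of_contDiff hγ₁ hγ₂.continuous fun t ht ↦ ?_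
    rw [uIcc_of_le zero_le_one] at ht
    linear_combination hlevel t ht - hH (γ₁ t) (γ₂ t)
  simpa only [hIp, hK, arcIntegral, arcBoundary] using quintic_arc_recursion_ii_general arc hi j
end
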